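/- arXiv:1604.04376 — 6 statements merged into one kernel-verified Lean document; each statement's English description precedes it below -/
import Mathlib

section
/- Each of the three operators X_s = y ∂_q + i x q, E = x ∂_x + y ∂_y + 1/2 and D_s = i q ∂_y − ∂_x ∂_q commutes with each of the three operators X = −y ∂_x − (i/2) q², H = −x ∂_x + y ∂_y + q ∂_q + 1/2, Y = −x ∂_y − (i/2) ∂_q² (nine vanishing commutators; in particular the symplectic Dirac operator D_s is mp(2,ℝ)-equivariant). -/
open MvPolynomial Complex

noncomputable section

/-- The space of complex polynomials in three variables `x = X 0`, `y = X 1`, `q = X 2`. -/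
abbrev V : Type := MvPolynomial (Fin 3) ℂ

/-- Partial derivative `∂_x`. -/
def Dx : Module.End ℂ V := (pderiv (0 : Fin 3)).toLinearMap
/-- Partial derivative `∂_y`. -/
def Dy : Module.End ℂ V := (pderiv (1 : Fin 3)).toLinearMap
/-- Partial derivative `∂_q`. -/
def Dq : Module.End ℂ V := (pderiv (2 : Fin 3)).toLinearMap
/-- Multiplication by `x`. -/
def Mx : Module.End ℂ V := LinearMap.mulLeft ℂ (X 0)
/-- Multiplication by `y`. -/
def My : Module.End ℂ V := LinearMap.mulLeft ℂ (X 1)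
/-- Multiplication by `q`. -/
def Mq : Module.End ℂ V := LinearMap.mulLeft ℂ (X 2)

/-- `X = -y ∂_x - (i/2) q²`. -/
def opX : Module.End ℂ V := -(My * Dx) - (I / 2) • (Mq * Mq)
/-- `H = -x ∂_x + y ∂_y + q ∂_q + 1/2`. -/
def opH : Module.End ℂ V := -(Mx * Dx) + My * Dy + Mq * Dq + (1 / 2 : ℂ) • 1
/-- `Y = -x ∂_y - (i/2) ∂_q²`. -/
def opY : Module.End ℂ V := -(Mx * Dy) - (I / 2) • (Dq * Dq)
/-- `E = x ∂_x + y ∂_y + 1/2`. -/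
def opE : Module.End ℂ V := Mx * Dx + My * Dy + (1 / 2 : ℂ) • 1
/-- The symplectic Dirac operator `D_s = i q ∂_y - ∂_x ∂_q`. -/
def Ds : Module.End ℂ V := I • (Mq * Dy) - Dx * Dq
/-- `X_s = y ∂_q + i x q`. -/
def Xs : Module.End ℂ V := My * Dq + I • (Mx * Mq)
/-- `O1 = x² ∂_x + x y ∂_y - (1/2) x q ∂_q + (i/2) y ∂_q² + (1/2) x`. -/
def opO1 : Module.End ℂ V :=
  Mx * Mx * Dx + Mx * My * Dy - (1 / 2 : ℂ) • (Mx * Mq * Dq) + (I / 2) • (My * Dq * Dq)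
    + (1 / 2 : ℂ) • Mx
/-- `O2 = x y ∂_x + y² ∂_y + (1/2) y q ∂_q + (i/2) x q² + y`. -/
def opO2 : Module.End ℂ V :=
  Mx * My * Dx + My * My * Dy + (1 / 2 : ℂ) • (My * Mq * Dq) + (I / 2) • (Mx * Mq * Mq) + My

theorem pd_comm (i j : Fin 3) (p : V) : pderiv i (pderiv j p) = pderiv j (pderiv i p) := by
  have h : ⁅(pderiv i : Derivation ℂ V V), (pderiv j : Derivation ℂ V V)⁆ = 0 := by
    apply MvPolynomial.derivation_ext
    intro k
    rw [Derivation.commutator_apply]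
    simp only [pderiv_X, Derivation.zero_apply]
    fin_cases i <;> fin_cases j <;> fin_cases k <;> simp [Pi.single_apply]
  have := congrArg (fun d : Derivation ℂ V V => d p) h
  rw [Derivation.commutator_apply] at this
  exact sub_eq_zero.mp this

/-- Each of `X_s`, `E`, `D_s` commutes with each of `X`, `H`, `Y`; in particular the
symplectic Dirac operator `D_s` is `mp(2,ℝ)`-equivariant. -/
theorem mp2_equivariance :
    Xs * opX - opX * Xs = 0 ∧ Xs * opH - opH * Xs = 0 ∧ Xs * opY - opY * Xs = 0 ∧
    opE * opX - opX * opE = 0 ∧ opE * opH - opH * opE = 0 ∧ opE * opY - opY * opE = 0 ∧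
    Ds * opX - opX * Ds = 0 ∧ Ds * opH - opH * Ds = 0 ∧ Ds * opY - opY * Ds = 0 := by
  have hI : (C I : V) * C I = -1 := by
    rw [← C_mul, I_mul_I]; simp
  have hh : (C (1 / 2) : V) * 2 = 1 := by
    rw [show (2 : V) = C 2 from (map_ofNat C 2).symm, ← C_mul]; norm_num
  have hI2 : (C (I / 2) : V) = C I * C (1 / 2) := by
    rw [← C_mul]; congr 1; ring
  have e01 := fun p : V => pd_comm 1 0 p
  have e02 := fun p : V => pd_comm 2 0 p
  have e12 := fun p : V => pd_comm 2 1 p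
  refine ⟨?_, ?_, ?_, ?_, ?_, ?_, ?_, ?_, ?_⟩ <;>
  · apply LinearMap.ext
    intro p
    simp only [Xs, opX, opH, opY, opE, Ds, Dx, Dy, Dq, Mx, My, Mq, LinearMap.sub_apply,
      LinearMap.add_apply, LinearMap.neg_apply, LinearMap.smul_apply, Module.End.mul_apply,
      Module.End.one_apply, LinearMap.zero_apply, LinearMap.mulLeft_apply,
      Derivation.coeFn_coe, map_add, map_sub, map_neg,
      smul_eq_C_mul, Derivation.leibniz, smul_eq_mul, pderiv_C, hI2, map_zero, pderiv_one, mul_zero, add_zero, zero_add,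
      pderiv_X_self, pderiv_X_of_ne (show (0 : Fin 3) ≠ 1 by decide),
      pderiv_X_of_ne (show (0 : Fin 3) ≠ 2 by decide),
      pderiv_X_of_ne (show (1 : Fin 3) ≠ 0 by decide),
      pderiv_X_of_ne (show (1 : Fin 3) ≠ 2 by decide),
      pderiv_X_of_ne (show (2 : Fin 3) ≠ 0 by decide),
      pderiv_X_of_ne (show (2 : Fin 3) ≠ 1 by decide), e01, e02, e12]
    generalize (C I : V) = a at *
    generalize (C (1 / 2) : V) = b at *
    clear e01 e02 e12 hI2
    grind
end
end

section
/- With O1 = x² ∂_x + x y ∂_y − (1/2) x q ∂_q + (i/2) y ∂_q² + (1/2) x and D_s = i q ∂_y − ∂_x ∂_q, one has the operator identity [D_s, O1] = (3/2) x ∘ D_s (composition of multiplication by (3/2)x with D_s); equivalently D_s ∘ O1 = (O1 + (3/2) x) ∘ D_s. In particular O1 preserves the kernel of D_s. -/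
open MvPolynomial Complex

noncomputable section

/-- `[D_s, O1] = (3/2) x ∘ D_s`, equivalently `D_s ∘ O1 = (O1 + (3/2) x) ∘ D_s`;
in particular `O1` preserves the kernel of `D_s`. -/
theorem symmetry_O1 :
    Ds * opO1 - opO1 * Ds = (3 / 2 : ℂ) • (Mx * Ds) ∧
    Ds * opO1 = (opO1 + (3 / 2 : ℂ) • Mx) * Ds ∧
    ∀ p : V, Ds p = 0 → Ds (opO1 p) = 0 := by
  have hc : ∀ (i j : Fin 3) (p : V), pderiv (R := ℂ) i (pderiv (R := ℂ) j p) =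
      pderiv (R := ℂ) j (pderiv (R := ℂ) i p) := by
    intro i j p
    have h : ⁅(pderiv i : Derivation ℂ V V), (pderiv j : Derivation ℂ V V)⁆ = 0 := by
      apply MvPolynomial.derivation_ext
      intro k
      simp only [Derivation.commutator_apply, pderiv_X, Derivation.zero_apply]
      by_cases h1 : k = i <;> by_cases h2 : k = j <;> simp [Pi.single_apply, h1, h2] <;>
        split_ifs <;> simp
    have h' := congrArg (fun d : Derivation ℂ V V => d p) h
    simpa [Derivation.commutator_apply, sub_eq_zero] using h'
  have hI : (C I : V) * C I = -1 := by rw [← C_mul, I_mul_I]; simp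
  have hh : (C (1 / 2) : V) * 2 = 1 := by
    rw [show (2 : V) = C 2 from rfl, ← C_mul]; simp
  have h3 : (C (3 / 2) : V) = 3 * C (1 / 2) := by
    rw [show (3 : V) = C 3 from rfl, ← C_mul]; norm_num
  have hI2 : (C (I / 2) : V) = C I * C (1 / 2) := by
    rw [← C_mul]; congr 1; ring
  have key : Ds * opO1 - opO1 * Ds = (3 / 2 : ℂ) • (Mx * Ds) := by
    apply LinearMap.ext
    intro p
    simp only [Ds, opO1, Dx, Dy, Dq, Mx, My, Mq, LinearMap.sub_apply, LinearMap.add_apply,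
      LinearMap.smul_apply, Module.End.mul_apply, LinearMap.mulLeft_apply,
      Derivation.coeFn_coe, smul_eq_C_mul, hI2, h3]
    have e10 : pderiv (1 : Fin 3) (X 0 : V) = 0 := pderiv_X_of_ne (by decide)
    have e20 : pderiv (2 : Fin 3) (X 0 : V) = 0 := pderiv_X_of_ne (by decide)
    have e01 : pderiv (0 : Fin 3) (X 1 : V) = 0 := pderiv_X_of_ne (by decide)
    have e21 : pderiv (2 : Fin 3) (X 1 : V) = 0 := pderiv_X_of_ne (by decide)
    have e02 : pderiv (0 : Fin 3) (X 2 : V) = 0 := pderiv_X_of_ne (by decide)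
    have e12 : pderiv (1 : Fin 3) (X 2 : V) = 0 := pderiv_X_of_ne (by decide)
    simp only [map_add, map_sub, pderiv_mul, pderiv_C, pderiv_X_self, e10, e20, e01, e21, e02,
      e12, zero_mul, mul_zero, zero_add, add_zero, one_mul, mul_one, hc 1 0, hc 2 0, hc 2 1, map_zero, pderiv_one]
    generalize (C (1 / 2) : V) = c at *
    generalize (C I : V) = ii at *
    grind
  have key2 : Ds * opO1 = (opO1 + (3 / 2 : ℂ) • Mx) * Ds := by
    rw [add_mul, smul_mul_assoc, ← key]; abel
  refine ⟨key, key2, fun p hp => ?_⟩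
  have := congrArg (fun f : Module.End ℂ V => f p) key2
  simpa [Module.End.mul_apply, hp] using this
end
end

section
/- The operators O1 = x² ∂_x + x y ∂_y − (1/2) x q ∂_q + (i/2) y ∂_q² + (1/2) x and O2 = x y ∂_x + y² ∂_y + (1/2) y q ∂_q + (i/2) x q² + y commute: [O1, O2] = 0. -/
open MvPolynomial Complex

noncomputable section

/-- Partial derivatives commute. -/
theorem pderiv_swap (i j : Fin 3) (f : V) :
    pderiv i (pderiv j f) = pderiv j (pderiv i f) := by
  have h : ⁅pderiv (R := ℂ) i, pderiv (R := ℂ) j⁆ = 0 := by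
    apply MvPolynomial.derivation_ext
    intro k
    rw [Derivation.commutator_apply, pderiv_X, pderiv_X, Derivation.zero_apply]
    simp only [Pi.single_apply]
    split_ifs <;> simp
  have := congrArg (fun D => D f) h
  simpa [Derivation.commutator_apply, sub_eq_zero] using this

/-- The operators `O1` and `O2` commute. -/
theorem O1_O2_commute : opO1 * opO2 - opO2 * opO1 = 0 := by
  apply LinearMap.ext
  intro f
  have hI : (C (I / 2) : V) * C (I / 2) = - (C (1 / 2) * C (1 / 2)) := by
    rw [← C_mul, ← C_mul, ← C_neg]
    congr 1
    linear_combination (1 / 4 : ℂ) * I_mul_I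
  have h2 : (C (1 / 2) : V) * 2 = 1 := by
    have : (2 : V) = C 2 := (map_ofNat C 2).symm
    rw [this, ← C_mul]
    norm_num
  have e1 : ∀ g : V, opO1 g = X 0 * X 0 * pderiv 0 g + X 0 * X 1 * pderiv 1 g
      - C (1 / 2) * (X 0 * X 2 * pderiv 2 g) + C (I / 2) * (X 1 * pderiv 2 (pderiv 2 g))
      + C (1 / 2) * (X 0 * g) := by
    intro g
    simp only [opO1, Mx, My, Mq, Dx, Dy, Dq, LinearMap.add_apply, LinearMap.sub_apply,
      LinearMap.smul_apply, Module.End.mul_apply, LinearMap.mulLeft_apply, smul_eq_C_mul,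
      Derivation.coeFn_coe]
    ring
  have e2 : ∀ g : V, opO2 g = X 0 * X 1 * pderiv 0 g + X 1 * X 1 * pderiv 1 g
      + C (1 / 2) * (X 1 * X 2 * pderiv 2 g) + C (I / 2) * (X 0 * X 2 * X 2 * g)
      + X 1 * g := by
    intro g
    simp only [opO2, Mx, My, Mq, Dx, Dy, Dq, LinearMap.add_apply, LinearMap.sub_apply,
      LinearMap.smul_apply, Module.End.mul_apply, LinearMap.mulLeft_apply, smul_eq_C_mul,
      Derivation.coeFn_coe]
    ring
  have x01 : pderiv (0 : Fin 3) (X 1 : V) = 0 := pderiv_X_of_ne (by decide)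
  have x02 : pderiv (0 : Fin 3) (X 2 : V) = 0 := pderiv_X_of_ne (by decide)
  have x10 : pderiv (1 : Fin 3) (X 0 : V) = 0 := pderiv_X_of_ne (by decide)
  have x12 : pderiv (1 : Fin 3) (X 2 : V) = 0 := pderiv_X_of_ne (by decide)
  have x20 : pderiv (2 : Fin 3) (X 0 : V) = 0 := pderiv_X_of_ne (by decide)
  have x21 : pderiv (2 : Fin 3) (X 1 : V) = 0 := pderiv_X_of_ne (by decide)
  rw [LinearMap.sub_apply, Module.End.mul_apply, Module.End.mul_apply, LinearMap.zero_apply,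
    e1, e2, e1, e2]
  simp only [map_add, map_sub, Derivation.leibniz, smul_eq_mul, pderiv_C, pderiv_X_self,
    x01, x02, x10, x12, x20, x21, map_zero, Derivation.map_one_eq_zero, mul_zero, zero_mul,
    mul_one, add_zero, zero_add]
  simp only [pderiv_swap 1 0, pderiv_swap 2 0, pderiv_swap 2 1]
  generalize (C (I / 2) : V) = a at *
  generalize (C (1 / 2) : V) = b at *
  generalize (X 0 : V) = x at *
  generalize (X 1 : V) = y at *
  generalize (X 2 : V) = q at *
  linear_combination (4 * x * y * q * pderiv 2 f + 2 * x * y * f) * hI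
    + (-2 * b * x * y * q * pderiv 2 f - x * y * f * (1 + b) - x ^ 2 * q ^ 2 * a * f
      + y ^ 2 * a * pderiv 2 (pderiv 2 f)) * h2
end
end

section
/- Let λ ∈ ℂ and let v = v(q) be any complex polynomial in the single variable q (regarded as a polynomial in x, y, q constant in x and y). Then, with X_s v = y ∂_q v + i x q v, one has the identities (∂_x(x∂_x + y∂_y − λ + 1/4) + (1/2)q(i q ∂_y − ∂_x ∂_q))(X_s v) = (3/4 − λ) · i q v and (∂_y(x∂_x + y∂_y − λ + 1/4) − (i/2)∂_q(i q ∂_y − ∂_x ∂_q))(X_s v) = (3/4 − λ) · ∂_q v. -/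
open MvPolynomial Complex

noncomputable section

/-- The image in `V` of a one-variable polynomial `v(q)`, constant in `x` and `y`. -/
def ofQ (v : Polynomial ℂ) : V := Polynomial.aeval (X 2 : V) v

theorem pderiv_ofQ (i : Fin 3) (v : Polynomial ℂ) :
    pderiv i (ofQ v) = ofQ (Polynomial.derivative v) * pderiv i (X 2 : V) := by
  unfold ofQ
  induction v using Polynomial.induction_on' with
  | add p r hp hr => simp only [map_add, hp, hr, add_mul]
  | monomial n a =>
    rw [Polynomial.derivative_monomial]
    simp only [Polynomial.aeval_monomial, Derivation.leibniz, Derivation.leibniz_pow,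
      MvPolynomial.algebraMap_eq, pderiv_C, map_mul, map_natCast, smul_eq_mul, nsmul_eq_mul]
    ring

theorem Ds_Xs_ofQ (v : Polynomial ℂ) : Ds (Xs (ofQ v)) = -(C I * ofQ v) := by
  simp [Ds, Xs, Dx, Dy, Dq, Mx, My, Mq, pderiv_ofQ, pderiv_X, Pi.single_apply,
    MvPolynomial.smul_eq_C_mul]
  ring

theorem E_Xs_ofQ (l : ℂ) (v : Polynomial ℂ) :
    (Mx * Dx + My * Dy + (1 / 4 - l) • (1 : Module.End ℂ V)) (Xs (ofQ v))
      = (5 / 4 - l) • Xs (ofQ v) := by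
  have h : (5 / 4 - l) = 1 + (1 / 4 - l) := by ring
  rw [h, add_smul, one_smul, LinearMap.add_apply, LinearMap.smul_apply, Module.End.one_apply]
  congr 1
  simp [Xs, Dx, Dy, Dq, Mx, My, Mq, pderiv_ofQ, pderiv_X, Pi.single_apply,
    MvPolynomial.smul_eq_C_mul]
  ring

theorem Dx_Xs_ofQ (v : Polynomial ℂ) : Dx (Xs (ofQ v)) = I • Mq (ofQ v) := by
  simp [Xs, Dx, Dq, Mx, My, Mq, pderiv_ofQ, pderiv_X, Pi.single_apply]

theorem Dy_Xs_ofQ (v : Polynomial ℂ) : Dy (Xs (ofQ v)) = Dq (ofQ v) := by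
  simp [Xs, Dy, Dq, Mx, My, Mq, pderiv_ofQ, pderiv_X, Pi.single_apply]

/-- For `λ ∈ ℂ` and any polynomial `v = v(q)` in the single variable `q`, with
`X_s v = y ∂_q v + i x q v`, one has
`π̂_λ(e1)(X_s v) = (3/4 - λ) · i q v` and `π̂_λ(e2)(X_s v) = (3/4 - λ) · ∂_q v`. -/
theorem singular_vector_computation (l : ℂ) (v : Polynomial ℂ) :
    (Dx * (Mx * Dx + My * Dy + (1 / 4 - l) • 1) + (1 / 2 : ℂ) • (Mq * Ds)) (Xs (ofQ v))
      = (3 / 4 - l) • (I • Mq (ofQ v)) ∧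
    (Dy * (Mx * Dx + My * Dy + (1 / 4 - l) • 1) - (I / 2) • (Dq * Ds)) (Xs (ofQ v))
      = (3 / 4 - l) • Dq (ofQ v) := by
  have hD : Ds (Xs (ofQ v)) = -(I • ofQ v) := by
    rw [Ds_Xs_ofQ, MvPolynomial.smul_eq_C_mul]
  constructor
  · rw [LinearMap.add_apply, Module.End.mul_apply, E_Xs_ofQ, map_smul, Dx_Xs_ofQ,
      LinearMap.smul_apply, Module.End.mul_apply, hD, map_neg, map_smul]
    module
  · rw [LinearMap.sub_apply, Module.End.mul_apply, E_Xs_ofQ, map_smul, Dy_Xs_ofQ,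
      LinearMap.smul_apply, Module.End.mul_apply, hD, map_neg, map_smul, smul_neg, smul_smul]
    have h : I / 2 * I = -(1 / 2) := by
      rw [div_mul_eq_mul_div, I_mul_I]; norm_num
    rw [h]
    module
end
end

section
/- For λ = 3/4 and every complex polynomial v = v(q) in the single variable q (regarded as a polynomial in x, y, q constant in x and y), the element X_s v = y ∂_q v + i x q v is a singular vector: (∂_x(x∂_x + y∂_y − 1/2) + (1/2)q(i q ∂_y − ∂_x ∂_q))(X_s v) = 0 and (∂_y(x∂_x + y∂_y − 1/2) − (i/2)∂_q(i q ∂_y − ∂_x ∂_q))(X_s v) = 0. Hence the space Sol(g,p; ℂ[x,y] ⊗ ℂ[q]) of polynomial solutions annihilated by π̂_λ(e1) and π̂_λ(e2) is nontrivial for λ = 3/4 and contains the subspace X_s·ℂ[q]. -/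
open MvPolynomial Complex

noncomputable section

/-- `π̂_λ(e1)` at `λ = 3/4`. -/
def A1 : Module.End ℂ V :=
  Dx * (Mx * Dx + My * Dy + (1 / 4 - 3 / 4 : ℂ) • 1) + (1 / 2 : ℂ) • (Mq * Ds)

/-- `π̂_λ(e2)` at `λ = 3/4`. -/
def A2 : Module.End ℂ V :=
  Dy * (Mx * Dx + My * Dy + (1 / 4 - 3 / 4 : ℂ) • 1) - (I / 2) • (Dq * Ds)

theorem ofQ_dx (v : Polynomial ℂ) : pderiv (0 : Fin 3) (ofQ v) = 0 := by
  have h := (pderiv (R := ℂ) (0 : Fin 3)).map_aeval v (X 2 : V)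
  rw [ofQ, h]
  simp [pderiv_X]

theorem ofQ_dy (v : Polynomial ℂ) : pderiv (1 : Fin 3) (ofQ v) = 0 := by
  have h := (pderiv (R := ℂ) (1 : Fin 3)).map_aeval v (X 2 : V)
  rw [ofQ, h]
  simp [pderiv_X]

theorem ofQ_dq (v : Polynomial ℂ) : pderiv (2 : Fin 3) (ofQ v) = ofQ v.derivative := by
  have h := (pderiv (R := ℂ) (2 : Fin 3)).map_aeval v (X 2 : V)
  rw [ofQ, h]
  simp [pderiv_X, ofQ]

theorem Xs_ofQ (v : Polynomial ℂ) :
    Xs (ofQ v) = X 1 * ofQ v.derivative + C I * (X 0 * (X 2 * ofQ v)) := by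
  simp [Xs, My, Dq, Mx, Mq, ofQ_dq, smul_eq_C_mul]

theorem C_half : (C (1 / 2 : ℂ) : V) + C (1 / 2 : ℂ) = 1 := by
  rw [← C_add]; norm_num

theorem C_I_sq : (C I : V) * C I = -1 := by
  rw [← C_mul, I_mul_I]; simp

theorem singular_aux (v : Polynomial ℂ) : A1 (Xs (ofQ v)) = 0 ∧ A2 (Xs (ofQ v)) = 0 := by
  have e1 : (1 / 4 - 3 / 4 : ℂ) = -(1 / 2) := by norm_num
  have e2 : (I / 2 : ℂ) = I * (1 / 2) := by ring
  have h1 := C_half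
  have h2 := C_I_sq
  rw [Xs_ofQ]
  constructor
  · simp only [A1, Ds, Dx, Dy, Dq, Mx, My, Mq, e1, smul_eq_C_mul, LinearMap.add_apply,
      LinearMap.sub_apply, LinearMap.smul_apply, Module.End.mul_apply, Module.End.one_apply,
      LinearMap.mulLeft_apply, Derivation.coeFn_coe, map_add, map_sub, map_neg, Derivation.leibniz,
      ofQ_dx, ofQ_dy, ofQ_dq, smul_eq_mul, pderiv_C, pderiv_X, Pi.single_apply]
    simp [ofQ_dx, ofQ_dy, ofQ_dq, -one_div] 
    grind
  · simp only [A2, Ds, Dx, Dy, Dq, Mx, My, Mq, e1, e2, smul_eq_C_mul, LinearMap.add_apply,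
      LinearMap.sub_apply, LinearMap.smul_apply, Module.End.mul_apply, Module.End.one_apply,
      LinearMap.mulLeft_apply, Derivation.coeFn_coe, map_add, map_sub, map_neg, Derivation.leibniz,
      ofQ_dx, ofQ_dy, ofQ_dq, smul_eq_mul, pderiv_C, pderiv_X, Pi.single_apply, C_mul]
    simp [ofQ_dx, ofQ_dy, ofQ_dq, -one_div]
    grind

/-- For `λ = 3/4`, every `X_s v` with `v = v(q)` a one-variable polynomial is a singular
vector, annihilated by `π̂_λ(e1)` and `π̂_λ(e2)`; hence the solution space is nontrivial
and contains `X_s · ℂ[q]`. -/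
theorem singular_vector_lambda_three_quarters :
    (∀ v : Polynomial ℂ, A1 (Xs (ofQ v)) = 0 ∧ A2 (Xs (ofQ v)) = 0) ∧
    (∃ p : V, p ≠ 0 ∧ A1 p = 0 ∧ A2 p = 0) := by
  refine ⟨singular_aux, Xs (ofQ 1), ?_, singular_aux 1⟩
  rw [Xs_ofQ]
  simp [ofQ, X_ne_zero]
end
end

section
/- For λ ∈ ℂ define operators ρ_λ(Z) on V for the eight basis elements Z of sl(3,ℂ) by: ρ_λ(f1) = −∂_x, ρ_λ(f2) = −∂_y, ρ_λ(e) = −y∂_x − (i/2)q², ρ_λ(h) = −x∂_x + y∂_y + q∂_q + 1/2, ρ_λ(f) = −x∂_y − (i/2)∂_q², ρ_λ(h0) = (3/2)(x∂_x + y∂_y) + λ + 3/2, ρ_λ(e1) = x(x∂_x + y∂_y + λ + 3/2) − (1/2)x(q∂_q + 1/2) + (i/2)y∂_q², ρ_λ(e2) = y(x∂_x + y∂_y + λ + 3/2) + (1/2)y(q∂_q + 1/2) + (i/2)x q². Then the symplectic Dirac operator D_s = i q ∂_y − ∂_x ∂_q intertwines the λ = −3/4 and λ = 3/4 families: D_s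 ∘ ρ_{−3/4}(Z) = ρ_{3/4}(Z) ∘ D_s for each of the eight basis elements Z ∈ {f1, f2, e, h, f, h0, e1, e2}. -/
open MvPolynomial Complex

noncomputable section

/-- `ρ_λ(h0) = (3/2)(x∂_x + y∂_y) + λ + 3/2`. -/
def rho_h0 (l : ℂ) : Module.End ℂ V := (3 / 2 : ℂ) • (Mx * Dx + My * Dy) + (l + 3 / 2) • 1

/-- `ρ_λ(e1) = x(x∂_x + y∂_y + λ + 3/2) - (1/2)x(q∂_q + 1/2) + (i/2)y∂_q²`. -/
def rho_e1 (l : ℂ) : Module.End ℂ V :=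
  Mx * (Mx * Dx + My * Dy + (l + 3 / 2) • 1)
    - (1 / 2 : ℂ) • (Mx * (Mq * Dq + (1 / 2 : ℂ) • 1)) + (I / 2) • (My * (Dq * Dq))

/-- `ρ_λ(e2) = y(x∂_x + y∂_y + λ + 3/2) + (1/2)y(q∂_q + 1/2) + (i/2)xq²`. -/
def rho_e2 (l : ℂ) : Module.End ℂ V :=
  My * (Mx * Dx + My * Dy + (l + 3 / 2) • 1)
    + (1 / 2 : ℂ) • (My * (Mq * Dq + (1 / 2 : ℂ) • 1)) + (I / 2) • (Mx * (Mq * Mq))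

/-- The symplectic Dirac operator `D_s = iq∂_y - ∂_x∂_q` intertwines `ρ_{-3/4}` and
`ρ_{3/4}` on each of the eight basis elements `f1, f2, e, h, f, h0, e1, e2`, where
`ρ_λ(f1) = -∂_x`, `ρ_λ(f2) = -∂_y`, `ρ_λ(e) = -y∂_x - (i/2)q²`,
`ρ_λ(h) = -x∂_x + y∂_y + q∂_q + 1/2`, `ρ_λ(f) = -x∂_y - (i/2)∂_q²`. -/
theorem Ds_intertwines :
    Ds * (-Dx) = (-Dx) * Ds ∧
    Ds * (-Dy) = (-Dy) * Ds ∧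
    Ds * (-(My * Dx) - (I / 2) • (Mq * Mq)) = (-(My * Dx) - (I / 2) • (Mq * Mq)) * Ds ∧
    Ds * (-(Mx * Dx) + My * Dy + Mq * Dq + (1 / 2 : ℂ) • 1)
      = (-(Mx * Dx) + My * Dy + Mq * Dq + (1 / 2 : ℂ) • 1) * Ds ∧
    Ds * (-(Mx * Dy) - (I / 2) • (Dq * Dq)) = (-(Mx * Dy) - (I / 2) • (Dq * Dq)) * Ds ∧
    Ds * rho_h0 (-3 / 4) = rho_h0 (3 / 4) * Ds ∧
    Ds * rho_e1 (-3 / 4) = rho_e1 (3 / 4) * Ds ∧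
    Ds * rho_e2 (-3 / 4) = rho_e2 (3 / 4) * Ds := by
  have h01 : ∀ p : V, pderiv (1 : Fin 3) (pderiv 0 p) = pderiv 0 (pderiv 1 p) := fun p => pd_comm 1 0 p
  have h02 : ∀ p : V, pderiv (2 : Fin 3) (pderiv 0 p) = pderiv 0 (pderiv 2 p) := fun p => pd_comm 2 0 p
  have h12 : ∀ p : V, pderiv (2 : Fin 3) (pderiv 1 p) = pderiv 1 (pderiv 2 p) := fun p => pd_comm 2 1 p
  have hI : (C I : V) * C I = -1 := by rw [← C_mul, I_mul_I]; simp
  have hI2 : (C (I / 2) : V) = C I * C (1 / 2) := by rw [← C_mul]; congr 1; ring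
  have hh : (C (1 / 2) : V) * 2 = 1 := by
    rw [show (2 : V) = C 2 from rfl, ← C_mul]; norm_num
  have ha : (C (-3 / 4) : V) = -(3 * C (1 / 2) * C (1 / 2)) := by
    rw [show (3 : V) = C 3 from rfl, ← C_mul, ← C_mul, ← C_neg]; congr 1; norm_num
  have hb : (C (3 / 4) : V) = 3 * C (1 / 2) * C (1 / 2) := by
    rw [show (3 : V) = C 3 from rfl, ← C_mul, ← C_mul]; congr 1; norm_num
  have hc : (C (3 / 2) : V) = 3 * C (1 / 2) := by
    rw [show (3 : V) = C 3 from rfl, ← C_mul]; congr 1; norm_num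
  have e01 : (1 : Fin 3) ≠ 0 := by decide
  have e02 : (2 : Fin 3) ≠ 0 := by decide
  have e12 : (2 : Fin 3) ≠ 1 := by decide
  refine ⟨?_, ?_, ?_, ?_, ?_, ?_, ?_, ?_⟩ <;>
  · refine LinearMap.ext fun p => ?_
    simp only [Ds, rho_h0, rho_e1, rho_e2, Dx, Dy, Dq, Mx, My, Mq, Module.End.mul_apply,
      LinearMap.add_apply, LinearMap.sub_apply, LinearMap.neg_apply, LinearMap.smul_apply,
      Module.End.one_apply, LinearMap.mulLeft_apply, Derivation.coeFn_coe, smul_eq_C_mul, map_add, map_sub, map_neg, pderiv_mul, pderiv_C,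
      pderiv_X_self, pderiv_X_of_ne e01, pderiv_X_of_ne e02, pderiv_X_of_ne e12,
      pderiv_X_of_ne e01.symm, pderiv_X_of_ne e02.symm, pderiv_X_of_ne e12.symm,
      h01, h02, h12, map_zero, Derivation.map_one_eq_zero, zero_mul, one_mul, zero_add,
      add_zero, mul_zero]
    try simp only [hI2, ha, hb, hc]
    clear h01 h02 h12 hI2 ha hb hc e01 e02 e12
    generalize (C I : V) = i at hI ⊢
    generalize (C (1 / 2) : V) = t at hh ⊢
    grind
end
end
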